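/- arXiv:2308.01259 — 2 statements merged into one kernel-verified Lean document; each statement's English description precedes it below -/
import Mathlib

section
/- Let L be a T1 topological space with more than one point and let κ be an infinite cardinal with d(L) ≤ κ. Then there exists a subset X of the product space L^(2^κ) such that X is κ-dense in L^(2^κ), |X| = κ, the subspace X is crowded with Δ(X) = κ, and every dense subset of the subspace X is open in X (i.e., X is submaximal). -/
open Cardinal

/-- A subset `A` of a topological space `Y` is `κ`-dense if `|A ∩ U| ≥ κ`
for every nonempty open `U ⊆ Y`. -/
def KDense {Y : Type*} [TopologicalSpace Y] (κ : Cardinal) (A : Set Y) : Prop :=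
  ∀ U : Set Y, IsOpen U → U.Nonempty → κ ≤ #↥(A ∩ U)

/-- The density of a topological space: the smallest cardinality of a dense subset. -/
noncomputable def density (X : Type u) [TopologicalSpace X] : Cardinal.{u} :=
  sInf {c : Cardinal.{u} | ∃ s : Set X, Dense s ∧ #s = c}

/-- The dispersion character of a space: the smallest cardinality of a nonempty
open subset. -/
noncomputable def dispersion (X : Type u) [TopologicalSpace X] : Cardinal.{u} :=
  sInf {c : Cardinal.{u} | ∃ U : Set X, IsOpen U ∧ U.Nonempty ∧ #U = c}

/-!
Let `K` be an index set of cardinality `κ`. By the Hewitt–Marczewski–Pondiczery construction there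
is `x : K → L^(2^κ)` all of whose nonempty open preimages have cardinality `κ`, so that every
point is a cluster point of `x` along the filter of sets with complement smaller than `κ`; Zorn's
lemma shrinks this filter to a minimal `F` with the same property. There are only `2^κ` pairs of a
set `A` in `F` and a point `b` of `A`, so each of them can be assigned a coordinate of its own, in
which `x` is modified off an `F`-large set in such a way that afterwards an open set contains the
new value at `b` and omits the new values outside `A`. The modified map `y` is `F`-almost
everywhere equal to `x` in each coordinate, so it has the same cluster points, and now all members
of `F` are open for the topology induced by `y`. A dense set meets all of these open sets within
every preimage of a nonempty open set, hence belongs to `F` by minimality, hence is open.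
-/

open Filter Set Topology

theorem exists_dense_mk_eq_density (X : Type u) [TopologicalSpace X] :
    ∃ s : Set X, Dense s ∧ #s = density X :=
  csInf_mem (s := {c | ∃ s : Set X, Dense s ∧ #s = c}) ⟨_, univ, dense_univ, rfl⟩

section KDense

variable {Y : Type u} [TopologicalSpace Y] {κ : Cardinal.{u}} {X : Set Y}

theorem KDense.le_mk_of_isOpen (hX : KDense κ X) {W : Set X} (hW : IsOpen W) (hne : W.Nonempty) :
    κ ≤ #W := by
  obtain ⟨U, hU, rfl⟩ := isOpen_induced_iff.1 hW
  have hUne : U.Nonempty := hne.imp' Subtype.val fun _ h => h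
  rw [← mk_image_eq (s := Subtype.val ⁻¹' U) Subtype.val_injective,
    Subtype.image_preimage_coe]
  exact hX U hU hUne

theorem KDense.not_isOpen_singleton (hX : KDense κ X) (hκ : 1 < κ) (x : X) :
    ¬ IsOpen ({x} : Set X) := fun h =>
  hκ.not_ge ((hX.le_mk_of_isOpen h (singleton_nonempty x)).trans_eq (mk_singleton x))

theorem KDense.dispersion_eq [Nonempty X] (hX : KDense #X X) : dispersion X = #X := by
  refine IsLeast.csInf_eq ⟨⟨univ, isOpen_univ, univ_nonempty, mk_univ⟩, ?_⟩
  rintro _ ⟨W, hW, hne, rfl⟩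
  exact hX.le_mk_of_isOpen hW hne

end KDense

section CoSmall

variable (K : Type u) [Infinite K]

/-- The filter of all sets whose complement has cardinality less than `#K`. Mathlib's
`Filter.cocardinal` is not applicable, since `#K` may be singular. -/
def coSmall : Filter K :=
  comk (fun s => #s < #K) (by simp [pos_iff_ne_zero])
    (fun _ ht _ hs => (mk_le_mk_of_subset hs).trans_lt ht)
    (fun _ hs _ ht => (mk_union_le _ _).trans_lt (add_lt_of_lt (aleph0_le_mk K) hs ht))

variable {K}

theorem frequently_coSmall {p : K → Prop} : (∃ᶠ a in coSmall K, p a) ↔ #K ≤ #{a | p a} := by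
  rw [Filter.Frequently, Filter.Eventually, coSmall, mem_comk, not_lt]
  simp only [compl_def, mem_ofPred_eq, not_not]

theorem coSmall_le_cofinite : coSmall K ≤ cofinite := by
  intro s hs
  rw [coSmall, mem_comk]
  exact (lt_aleph0_iff_finite.2 hs).trans_le (aleph0_le_mk K)

theorem exists_forall_frequently_eq {P : Type u} [Nonempty P] (hP : #P ≤ #K) :
    ∃ π : K → P, ∀ p, ∃ᶠ a in coSmall K, π a = p := by
  obtain ⟨e⟩ : #(P × K) ≤ #K := by
    simpa using (mul_le_max_of_aleph0_le_right (aleph0_le_mk K)).trans (max_le hP le_rfl)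
  refine ⟨fun a => (Function.invFun e a).1, fun p => frequently_coSmall.2 ?_⟩
  have hfiber (k : K) : (Function.invFun e (e (p, k))).1 = p := by
    rw [Function.leftInverse_invFun e.injective]
  refine mk_le_of_injective (f := fun k => ⟨e (p, k), hfiber k⟩) fun k k' h => ?_
  exact congrArg Prod.snd (e.injective (congrArg Subtype.val h))

end CoSmall

section Interpolation

open scoped Classical in
theorem exists_finset_injOn_filter_mem {K : Type*} {T : Set (Set K)} (hT : T.Finite) :
    ∃ E : Finset K, InjOn (fun A : Set K => E.filter (· ∈ A)) T := by
  suffices h : ∀ᶠ E : Finset K in atTop, ∀ A ∈ T, ∀ B ∈ T,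
      E.filter (· ∈ A) = E.filter (· ∈ B) → A = B by
    obtain ⟨E, hE⟩ := h.exists
    exact ⟨E, fun A hA B hB => hE A hA B hB⟩
  refine (eventually_all_finite hT).2 fun A _ => (eventually_all_finite hT).2 fun B _ => ?_
  by_cases hAB : A = B
  · exact .of_forall fun _ _ => hAB
  · obtain ⟨k, hk⟩ : ∃ k, ¬ (k ∈ A ↔ k ∈ B) := by simpa [Set.ext_iff] using hAB
    filter_upwards [eventually_ge_atTop {k}] with E hE hEq
    have hkE : k ∈ E := Finset.singleton_subset_iff.1 hE
    refine absurd ?_ hk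
    simpa [hkE] using Finset.ext_iff.1 hEq k

variable {K J : Type u} [Infinite K]

theorem exists_forall_frequently_eqOn (hJ : #J ≤ 2 ^ #K) :
    ∃ v : K → J → K, ∀ t : Set J, t.Finite → ∀ g : J → K, ∃ᶠ a in coSmall K, EqOn (v a) g t := by
  classical
  obtain ⟨φ⟩ : #J ≤ #(Set K) := by rwa [mk_set]
  let : Zero K := ⟨Classical.arbitrary K⟩
  have hP : #(Finset K × (Finset K →₀ K)) ≤ #K := by simp
  obtain ⟨π, hπ⟩ := exists_forall_frequently_eq hP
  -- `a` codes a finite set `E` and a finitely supported table of values, in which `v a` looks up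
  -- the trace of `φ j` on `E`.
  let trace (E : Finset K) (j : J) : Finset K := E.filter (· ∈ φ j)
  refine ⟨fun a j => (π a).2 (trace (π a).1 j), fun t ht g => ?_⟩
  obtain ⟨E, hE⟩ := exists_finset_injOn_filter_mem (ht.image φ)
  have hinj : InjOn (trace E) t := hE.comp φ.injective.injOn (mapsTo_image φ t)
  obtain ⟨f, hf⟩ : ∃ f : Finset K →₀ K, ∀ j ∈ t, f (trace E j) = g j := by
    refine ⟨Finsupp.indicator (ht.image (trace E)).toFinset
      fun s _ => Function.extend (t.domRestrict (trace E)) (t.domRestrict g) 0 s, fun j hj => ?_⟩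
    rw [Finsupp.indicator_of_mem (by simpa using ⟨j, hj, rfl⟩)]
    exact hinj.injective.extend_apply _ _ ⟨j, hj⟩
  refine (hπ (E, f)).mono fun a ha j hj => ?_
  simpa only [ha] using hf j hj

end Interpolation

section DenseAlong

/-- The family `x` is dense along the filter `F`: every point is a cluster point of `x` along `F`.
For a filter of complements of small sets this says that no nonempty open set has a small
preimage. -/
def DenseAlong {K Y : Type*} [TopologicalSpace Y] (x : K → Y) (F : Filter K) : Prop :=
  ∀ z, MapClusterPt z F x

section General

variable {K Y : Type*} [TopologicalSpace Y] {x : K → Y} {F : Filter K}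

theorem DenseAlong.frequently_mem (hx : DenseAlong x F) {U : Set Y} (hU : IsOpen U)
    (hne : U.Nonempty) : ∃ᶠ a in F, x a ∈ U :=
  hne.elim fun z hz => (hx z).frequently (hU.mem_nhds hz)

theorem denseAlong_sInf {c : Set (Filter K)} (hne : c.Nonempty) (hdir : DirectedOn (· ≥ ·) c)
    (hc : ∀ G ∈ c, DenseAlong x G) : DenseAlong x (sInf c) := by
  refine fun z => mapClusterPt_iff_frequently.2 fun U hU hnot => ?_
  rw [Filter.Eventually, sInf_eq_iInf, mem_biInf_of_directed hdir hne] at hnot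
  obtain ⟨G, hG, hGnot⟩ := hnot
  exact (hc G hG z).frequently hU hGnot

theorem DenseAlong.exists_minimal_le (hx : DenseAlong x F) :
    ∃ G ≤ F, Minimal (DenseAlong x) G :=
  zorn_le_nonempty₀ (α := (Filter K)ᵒᵈ) {G | DenseAlong x G}
    (fun c hc hchain G hG => ⟨sInf (α := Filter K) c,
      denseAlong_sInf ⟨G, hG⟩ (IsChain.directedOn hchain) hc,
      fun _ h => sInf_le (α := Filter K) h⟩) F hx

theorem mem_of_dense_of_minimal_denseAlong [TopologicalSpace K] (hF : Minimal (DenseAlong x) F)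
    (hx : Continuous x) (hopen : ∀ A ∈ F, IsOpen A) {D : Set K} (hD : Dense D) : D ∈ F := by
  suffices h : DenseAlong x (F ⊓ 𝓟 D) from
    le_principal_iff.1 ((hF.le_of_le h inf_le_left).trans inf_le_right)
  refine fun z => mapClusterPt_iff_frequently.2 fun U hU => ?_
  obtain ⟨V, hVU, hV, hzV⟩ := mem_nhds_iff.1 hU
  rw [frequently_inf_principal, frequently_iff]
  intro A hA
  have hne : (A ∩ x ⁻¹' V).Nonempty :=
    frequently_iff.1 (hF.prop.frequently_mem hV ⟨z, hzV⟩) hA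
  obtain ⟨a, ⟨haA, haV⟩, haD⟩ :=
    hD.inter_open_nonempty _ ((hopen A hA).inter (hV.preimage hx)) hne
  exact ⟨a, haA, haD, hVU haV⟩

end General

section Pi

variable {K J : Type*} {L : J → Type*} [∀ j, TopologicalSpace (L j)] {x y : K → ∀ j, L j}
  {F : Filter K}

theorem mapClusterPt_pi_iff {z : ∀ j, L j} :
    MapClusterPt z F x ↔ ∀ t : Set J, t.Finite → ∀ w : ∀ j, Set (L j), (∀ j, w j ∈ 𝓝 (z j)) →
      ∃ᶠ a in F, x a ∈ t.pi w := by
  rw [mapClusterPt_iff_frequently, nhds_pi]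
  constructor
  · exact fun h t ht w hw => h _ (pi_mem_pi ht fun j _ => hw j)
  · intro h s hs
    obtain ⟨t, ht, w, hw, hws⟩ := Filter.mem_pi.1 hs
    exact (h t ht w hw).mono fun _ ha => hws ha

theorem DenseAlong.congr_coordinatewise (hx : DenseAlong x F)
    (hxy : ∀ j, ∀ᶠ a in F, x a j = y a j) : DenseAlong y F := by
  refine fun z => mapClusterPt_pi_iff.2 fun t ht w hw => ?_
  have hxyt : ∀ᶠ a in F, ∀ j ∈ t, x a j = y a j := (eventually_all_finite ht).2 fun j _ => hxy j
  refine ((mapClusterPt_pi_iff.1 (hx z) t ht w hw).and_eventually hxyt).mono ?_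
  exact fun a ⟨hxa, heq⟩ j hj => heq j hj ▸ hxa j hj

theorem minimal_denseAlong_congr_coordinatewise (hF : Minimal (DenseAlong x) F)
    (hxy : ∀ j, ∀ᶠ a in F, x a j = y a j) : Minimal (DenseAlong y) F := by
  refine ⟨hF.prop.congr_coordinatewise hxy, fun G hG hGF => hF.le_of_le ?_ hGF⟩
  exact hG.congr_coordinatewise fun j => hGF ((hxy j).mono fun _ => Eq.symm)

end Pi

theorem exists_denseAlong_coSmall {K J L : Type u} [Infinite K] [TopologicalSpace L] [Nonempty L]
    (hJ : #J ≤ 2 ^ #K) (hL : density L ≤ #K) :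
    ∃ x : K → J → L, DenseAlong x (coSmall K) := by
  obtain ⟨s, hs, hcard⟩ := exists_dense_mk_eq_density L
  have : Nonempty s := hs.nonempty.to_subtype
  obtain ⟨e, he⟩ : ∃ e : K → s, e.Surjective :=
    Function.exists_surjective_iff.2 ⟨inferInstance, hcard.trans_le hL⟩
  obtain ⟨v, hv⟩ := exists_forall_frequently_eqOn hJ
  refine ⟨fun a j => e (v a j), fun z => mapClusterPt_pi_iff.2 fun t ht w hw => ?_⟩
  have hg (j : J) : ∃ k, (e k : L) ∈ w j := by
    obtain ⟨p, hpw, hps⟩ := mem_closure_iff_nhds.1 (hs (z j)) _ (hw j)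
    obtain ⟨k, hk⟩ := he ⟨p, hps⟩
    exact ⟨k, hk ▸ hpw⟩
  choose g hg using hg
  exact (hv t ht g).mono fun a ha j hj => by simpa only [ha hj] using hg j

end DenseAlong

section Submaximal

theorem exists_isOpen_nonempty_ne_univ (L : Type*) [TopologicalSpace L] [NontrivialTopology L] :
    ∃ O : Set L, IsOpen O ∧ O.Nonempty ∧ O ≠ Set.univ := by
  obtain ⟨p, q, hpq⟩ := NontrivialTopology.exists_not_inseparable (α := L) inferInstance
  obtain ⟨O, hO, h | h⟩ := not_inseparable_iff_exists_open.1 hpq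
  · exact ⟨O, hO, ⟨p, h.1⟩, (ne_univ_iff_exists_notMem O).2 ⟨q, h.2⟩⟩
  · exact ⟨O, hO, ⟨q, h.1⟩, (ne_univ_iff_exists_notMem O).2 ⟨p, h.2⟩⟩

theorem mk_set_prod_self (K : Type u) [Infinite K] : #(Set K × K) = 2 ^ #K := by
  simpa using mul_eq_left ((aleph0_le_mk K).trans (cantor _).le) (cantor _).le (mk_ne_zero K)

theorem exists_eventuallyEq_forall_mem_isOpen_induced {K J : Type u} {L : Type*} [Infinite K]
    [TopologicalSpace L] [NontrivialTopology L] (hJ : 2 ^ #K ≤ #J) {F : Filter K}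
    (hF : F ≤ cofinite) (x : K → J → L) :
    ∃ y : K → J → L, (∀ j, ∀ᶠ a in F, x a j = y a j) ∧
      ∀ A ∈ F, IsOpen[.induced y inferInstance] A := by
  classical
  obtain ⟨O, hO, ⟨q, hq⟩, hne⟩ := exists_isOpen_nonempty_ne_univ L
  obtain ⟨p, hp⟩ := (ne_univ_iff_exists_notMem O).1 hne
  let T := {Ab : Set K × K // Ab.1 ∈ F ∧ Ab.2 ∈ Ab.1}
  have hT : #T ≤ #J := (mk_subtype_le _).trans ((mk_set_prod_self K).trans_le hJ)
  obtain ⟨f, hf⟩ : ∃ f : J → T, f.Surjective :=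
    Function.exists_surjective_iff.2
      ⟨⟨fun _ => ⟨(univ, Classical.arbitrary K), univ_mem, mem_univ _⟩⟩, hT⟩
  let y (a : K) (j : J) : L :=
    if a = (f j).1.2 then q else if a ∈ (f j).1.1 then x a j else p
  refine ⟨y, fun j => ?_, fun A hA => ?_⟩
  · filter_upwards [(f j).2.1, hF (finite_singleton (f j).1.2).compl_mem_cofinite] with a haA hab
    rw [mem_compl_singleton_iff] at hab
    simp only [y, if_neg hab, if_pos haA]
  · let : TopologicalSpace K := .induced y inferInstance
    refine isOpen_iff_forall_mem_open.2 fun b hb => ?_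
    obtain ⟨j, hj⟩ := hf ⟨(A, b), hA, hb⟩
    refine ⟨{a | y a j ∈ O}, fun a ha => ?_,
      hO.preimage ((continuous_apply j).comp continuous_induced_dom), ?_⟩
    · by_contra haA
      have hab : a ≠ b := fun h => haA (h ▸ hb)
      have hya : y a j = p := by simp only [y, hj, if_neg hab, if_neg haA]
      exact hp (hya ▸ ha)
    · have hyb : y b j = q := by simp only [y, hj, if_true]
      rwa [mem_ofPred_eq, hyb]

theorem t1Space_of_forall_mem_isOpen {K : Type*} [TopologicalSpace K] {F : Filter K}
    (hF : F ≤ cofinite) (hopen : ∀ A ∈ F, IsOpen A) : T1Space K where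
  t1 b := isOpen_compl_iff.1 <| hopen _ <| hF (finite_singleton b).compl_mem_cofinite

variable {K : Type u} [Infinite K]

theorem kDense_range {Y : Type u} [TopologicalSpace Y] {y : K → Y} (hinj : y.Injective)
    (hy : DenseAlong y (coSmall K)) : KDense #K (range y) := by
  intro U hU hne
  rw [← image_preimage_eq_range_inter, mk_image_eq hinj]
  exact frequently_coSmall.1 (hy.frequently_mem hU hne)

theorem exists_kDense_forall_dense_isOpen {J L : Type u} [TopologicalSpace L]
    [NontrivialTopology L] (hJ : #J = 2 ^ #K) (hL : density L ≤ #K) :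
    ∃ X : Set (J → L), KDense #K X ∧ #X = #K ∧ ∀ D : Set X, Dense D → IsOpen D := by
  have : Nontrivial L := .of_nontrivialTopology L
  obtain ⟨x, hx⟩ := exists_denseAlong_coSmall (L := L) hJ.le hL
  obtain ⟨F, hFK, hF⟩ := hx.exists_minimal_le
  have hFcof : F ≤ cofinite := hFK.trans coSmall_le_cofinite
  obtain ⟨y, hxy, hopen⟩ := exists_eventuallyEq_forall_mem_isOpen_induced hJ.ge hFcof x
  have hFy : Minimal (DenseAlong y) F := minimal_denseAlong_congr_coordinatewise hF hxy
  have hy : DenseAlong y (coSmall K) := fun z => (hFy.prop z).mono hFK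
  let : TopologicalSpace K := .induced y inferInstance
  have : T1Space K := t1Space_of_forall_mem_isOpen hFcof hopen
  have hinj : y.Injective := (IsInducing.induced y).injective
  let e : K ≃ₜ range y := (IsEmbedding.mk (.induced y) hinj).toHomeomorph
  refine ⟨range y, kDense_range hinj hy, mk_range_eq y hinj, fun D hD => ?_⟩
  have hDF : e ⁻¹' D ∈ F := mem_of_dense_of_minimal_denseAlong hFy continuous_induced_dom hopen
    (hD.preimage e.isOpenMap)
  exact e.isOpen_preimage.1 (hopen _ hDF)

end Submaximal

theorem stmt3_general {L J : Type u} [TopologicalSpace L] [NontrivialTopology L]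
    (κ : Cardinal.{u}) (hκ : ℵ₀ ≤ κ) (hJ : #J = 2 ^ κ) (hd : density L ≤ κ) :
    ∃ X : Set (J → L),
      KDense κ X ∧ #X = κ ∧
      (∀ x : X, ¬ IsOpen ({x} : Set X)) ∧
      dispersion X = κ ∧
      (∀ D : Set X, Dense D → IsOpen D) := by
  induction κ using Cardinal.inductionOn with | _ K
  have : Infinite K := infinite_iff.2 hκ
  obtain ⟨X, hX, hcard, hsub⟩ := exists_kDense_forall_dense_isOpen hJ hd
  have : Nonempty X := mk_ne_zero_iff.1 (hcard ▸ mk_ne_zero K)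
  refine ⟨X, hX, hcard, hX.not_isOpen_singleton (one_lt_aleph0.trans_le hκ), ?_, hsub⟩
  rw [← hcard] at hX ⊢
  exact hX.dispersion_eq

/-- If `L` is a T1 space with more than one point and `κ` is an
infinite cardinal with `d(L) ≤ κ`, then `L^(2^κ)` has a κ-dense subspace `X` of
cardinality `κ` which is crowded (no isolated points), has dispersion character
`κ`, and is submaximal: every subset dense in `X` is open in `X`. -/
theorem stmt3 {L : Type u} [TopologicalSpace L] [T1Space L] (hL : Nontrivial L)
    (κ : Cardinal.{u}) (hκ : ℵ₀ ≤ κ) (hd : density L ≤ κ) :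
    ∃ X : Set (((2 : Cardinal.{u}) ^ κ).out → L),
      KDense κ X ∧ #X = κ ∧
      (∀ x : X, ¬ IsOpen ({x} : Set X)) ∧
      dispersion X = κ ∧
      (∀ D : Set X, Dense D → IsOpen D) := by
  have : NontrivialTopology L := .of_exists_not_inseparable <|
    hL.exists_pair_ne.imp fun _ => .imp fun _ => mt Inseparable.eq
  exact stmt3_general κ hκ (mk_out _) hd
end

section
/- Let κ and λ be cardinals with 𝔠 ≤ κ = κ^ω < λ and 2^κ = 2^λ, and set μ := 2^κ. Then there exists a dense subspace X of the Tychonoff cube [0,1]^μ such that |X| = Δ(X) = λ, X is pseudocompact, connected and locally connected, and X is not κ⁺-resolvable (so X is κ⁺-irresolvable). -/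
open Cardinal unitInterval

/-- A space is pseudocompact if every continuous real-valued function on it is
bounded. -/
def IsPseudocompact (X : Type*) [TopologicalSpace X] : Prop :=
  ∀ f : X → ℝ, Continuous f → ∃ M : ℝ, ∀ x, |f x| ≤ M

/-- A space is `κ`-resolvable if it has `κ` many pairwise disjoint dense
subsets. -/
def IsKResolvable (X : Type u) [TopologicalSpace X] (κ : Cardinal.{u}) : Prop :=
  ∃ D : κ.out → Set X, (∀ i, Dense (D i)) ∧ Pairwise (Function.onFun Disjoint D)

/-!
The space is `X = Y ∪ range z`, where `Y` has at most `κ` points and makes `X` pseudocompact,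
connected and locally connected, while `z` enumerates `λ` points and prevents resolvability.

Since `κ = κ^ω`, the index set, of size `2^κ`, carries a σ-algebra with at most `κ` sets that
separates points; let `Y` consist of the measurable functions. Measurability does not restrict the
values on a countable set, and this alone forces pseudocompactness of every larger set. The set
`Y` is also closed under `x ⊔ (y ⊓ r)` for constants `r`, so any two of its points inside a box
with convex sides are joined by a connected subset of `Y` inside that box.

For `z`, take a maximal family `F` of functions `S → [0,1]`, `#S = λ`, such that every box of
`[0,1]^F` contains `(f s)_{f ∈ F}` for at least `λ` indices `s`. The Engelking–Karłowicz theorem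
lets `F` be of size `2^λ` and contain a function with zero set `A` for every `A ⊆ S` of size less
than `λ`; the latter makes every dense subset of the resulting set meet each open set in `λ`
points. If there were `ω` disjoint dense subsets, a function that takes values from a countable
dense set, one on each of them, could be added to `F`; by maximality it lies in `F`, but it is
constant on a dense set.

Finally, among `κ⁺` disjoint dense subsets of `X`, all but `κ` miss `Y` and so lie in `range z`.
-/

open Set Filter Function Topology MeasurableSpace

universe u v

section Faces

variable {ι : Type*} {K : ι → Type*}

theorem exists_finset_forall_eq_imp_mem [∀ i, TopologicalSpace (K i)] {U : Set (∀ i, K i)}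
    (hU : IsOpen U) {x : ∀ i, K i} (hx : x ∈ U) :
    ∃ t : Finset ι, ∀ y : ∀ i, K i, (∀ i ∈ t, y i = x i) → y ∈ U := by
  obtain ⟨t, J, hJ, hsub⟩ := isOpen_pi_iff.1 hU x hx
  exact ⟨t, fun y hy => hsub fun i hi => (hy i hi).symm ▸ (hJ i hi).2⟩

/-- A subset of a product meets every countable face if each assignment of values to countably many
coordinates is realised by one of its points. -/
def MeetsCountableFaces (X : Set (∀ i, K i)) : Prop :=
  ∀ A : Set ι, A.Countable → ∀ p : ∀ i, K i, ∃ x ∈ X, ∀ i ∈ A, x i = p i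

namespace MeetsCountableFaces

variable {X Y : Set (∀ i, K i)}

theorem mono (hX : MeetsCountableFaces X) (hXY : X ⊆ Y) : MeetsCountableFaces Y := by
  intro A hA p
  obtain ⟨x, hx, hxp⟩ := hX A hA p
  exact ⟨x, hXY hx, hxp⟩

variable [∀ i, TopologicalSpace (K i)]

theorem dense (hX : MeetsCountableFaces X) : Dense X := by
  refine dense_iff_inter_open.2 fun U hU ⟨p, hp⟩ => ?_
  obtain ⟨t, ht⟩ := exists_finset_forall_eq_imp_mem hU hp
  obtain ⟨x, hx, hxp⟩ := hX t t.countable_toSet p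
  exact ⟨x, ht x hxp, hx⟩

/- Only the coordinates in `A` matter for the `O n`, so moving the cluster point of the `x n` along
a face of `A` into `X` keeps it a cluster point of the `O n`. -/
theorem exists_mem_forall_nhds_frequently_inter_nonempty [∀ i, CompactSpace (K i)]
    (hX : MeetsCountableFaces X) {O : ℕ → Set (∀ i, K i)} (hO : ∀ n, IsOpen (O n))
    (hne : ∀ n, (O n).Nonempty) :
    ∃ q ∈ X, ∀ G ∈ 𝓝 q, ∃ᶠ n in atTop, (G ∩ O n).Nonempty := by
  classical
  choose x hx using hne
  choose t ht using fun n => exists_finset_forall_eq_imp_mem (hO n) (hx n)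
  set A : Set ι := ⋃ n, (t n : Set ι)
  obtain ⟨p, -, hp⟩ := isCompact_univ.exists_mapClusterPt (f := atTop) (u := x) (by simp)
  obtain ⟨q, hqX, hqp⟩ := hX A (countable_iUnion fun n => (t n).countable_toSet) p
  refine ⟨q, hqX, fun G hG => ?_⟩
  let φ : (∀ i, K i) → ∀ i, K i := fun z => A.piecewise z q
  have hφ : Continuous φ := by
    refine continuous_pi fun i => ?_
    by_cases hi : i ∈ A
    · simpa only [φ, piecewise_eq_of_mem _ _ _ hi] using continuous_apply i
    · simpa only [φ, piecewise_eq_of_notMem _ _ _ hi] using continuous_const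
  have hφp : φ p = q := by
    ext i
    by_cases hi : i ∈ A <;> simp [φ, hi, hqp]
  have hφG : φ ⁻¹' G ∈ 𝓝 p := hφ.continuousAt.preimage_mem_nhds (by rwa [hφp])
  refine (mapClusterPt_iff_frequently.1 hp _ hφG).mono fun n hn => ⟨φ (x n), hn, ht n _ ?_⟩
  exact fun i hi => piecewise_eq_of_mem _ _ _ (mem_iUnion.2 ⟨n, hi⟩)

theorem isPseudocompact [∀ i, CompactSpace (K i)] (hX : MeetsCountableFaces X) :
    IsPseudocompact X := by
  intro f hf
  by_contra! hunbdd
  choose x hx using fun n : ℕ => hunbdd n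
  choose O hO hOf using fun n : ℕ => isOpen_induced_iff.1 (isOpen_lt continuous_const hf.abs :
    IsOpen {y : X | (n : ℝ) < |f y|})
  have hxO : ∀ n, (x n : ∀ i, K i) ∈ O n := fun n => (hOf n).ge (hx n)
  obtain ⟨q, hqX, hq⟩ :=
    hX.exists_mem_forall_nhds_frequently_inter_nonempty hO fun n => ⟨_, hxO n⟩
  obtain ⟨N, hN⟩ := exists_nat_gt |f ⟨q, hqX⟩|
  obtain ⟨G, hG, hGf⟩ := isOpen_induced_iff.1 (isOpen_lt hf.abs continuous_const :
    IsOpen {y : X | |f y| < N})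
  have hqG : q ∈ G := hGf.ge hN
  obtain ⟨n, hNn, hGn⟩ := frequently_atTop.1 (hq G (hG.mem_nhds hqG)) N
  obtain ⟨y, ⟨hyG, hyO⟩, hyX⟩ := hX.dense.inter_open_nonempty _ (hG.inter (hO n)) hGn
  have hlt : |f ⟨y, hyX⟩| < N := hGf.le hyG
  have hgt : (n : ℝ) < |f ⟨y, hyX⟩| := (hOf n).le hyO
  exact (hlt.trans_le (Nat.cast_le.2 hNn)).not_gt hgt

end MeetsCountableFaces

end Faces

section Connectedness

theorem isPreconnected_inter_of_dense {P : Type*} [TopologicalSpace P] {X Y U : Set P}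
    (hY : Dense Y) (hYX : Y ⊆ X) (hU : IsOpen U) (hYU : IsPreconnected (Y ∩ U)) :
    IsPreconnected (X ∩ U) :=
  hYU.subset_closure (inter_subset_inter_left U hYX) <|
    inter_subset_right.trans (inter_comm U Y ▸ hY.open_subset_closure_inter hU)

theorem isOpen_ordConnectedComponent {α : Type*} [LinearOrder α] [TopologicalSpace α]
    [OrderTopology α] {s : Set α} (hs : IsOpen s) (a : α) :
    IsOpen (ordConnectedComponent s a) := by
  refine isOpen_iff_mem_nhds.2 fun b hb => ?_
  rw [ordConnectedComponent_eq hb, ordConnectedComponent_mem_nhds]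
  exact hs.mem_nhds (ordConnectedComponent_subset hb)

/-- A set of functions is closed under truncated suprema if it contains `x ⊔ (y ⊓ r)` for all of its
members `x`, `y` and all constants `r`; letting `r` grow from `⊥` to `⊤` moves `x` to `x ⊔ y`. -/
def TruncSupClosed {ι α : Type*} [Lattice α] (s : Set (ι → α)) : Prop :=
  ∀ x ∈ s, ∀ y ∈ s, ∀ r : α, x ⊔ (y ⊓ const ι r) ∈ s

namespace TruncSupClosed

variable {ι α : Type*}

theorem inter [Lattice α] {s t : Set (ι → α)} (hs : TruncSupClosed s) (ht : TruncSupClosed t) :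
    TruncSupClosed (s ∩ t) :=
  fun x hx y hy r => ⟨hs x hx.1 y hy.1 r, ht x hx.2 y hy.2 r⟩

theorem isPreconnected [Lattice α] [BoundedOrder α] [TopologicalSpace α] [TopologicalLattice α]
    [PreconnectedSpace α] {s : Set (ι → α)} (hs : TruncSupClosed s) : IsPreconnected s := by
  have hpath : ∀ x y : ι → α, IsPreconnected (range fun r : α => x ⊔ (y ⊓ const ι r)) :=
    fun x y => isPreconnected_range <| continuous_pi fun i => by
      simp only [Pi.sup_apply, Pi.inf_apply, const_apply]; fun_prop
  refine isPreconnected_of_forall_pair fun x hx y hy => ⟨_, union_subset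
    (range_subset_iff.2 (hs x hx y hy)) (range_subset_iff.2 (hs y hy x hx)), Or.inl ⟨⊥, ?_⟩,
    Or.inr ⟨⊥, ?_⟩, (hpath x y).union (x ⊔ y) ⟨⊤, ?_⟩ ⟨⊤, ?_⟩ (hpath y x)⟩
  all_goals ext i; simp [sup_comm]

theorem pi [LinearOrder α] {t : Set ι} {J : ι → Set α} (hJ : ∀ i ∈ t, OrdConnected (J i)) :
    TruncSupClosed (t.pi J) := by
  intro x hx y hy r i hi
  have hsup : x i ⊔ y i ∈ J i := sup_ind (x i) (y i) (hx i hi) (hy i hi)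
  exact (hJ i hi).out (hx i hi) hsup ⟨le_sup_left, sup_le_sup_left inf_le_left _⟩

theorem setOf_measurable [Lattice α] [MeasurableSpace α] [MeasurableSup₂ α] [MeasurableInf₂ α]
    [MeasurableSpace ι] : TruncSupClosed {x : ι → α | Measurable x} :=
  fun _ hx _ hy _ => hx.sup (hy.inf measurable_const)

variable [LinearOrder α] [BoundedOrder α] [TopologicalSpace α] [OrderTopology α]
  [PreconnectedSpace α] {X Y : Set (ι → α)}

theorem connectedSpace (hY : TruncSupClosed Y) (hd : Dense Y) (hYX : Y ⊆ X) :
    ConnectedSpace X := by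
  refine isConnected_iff_connectedSpace.1 ⟨hd.nonempty.mono hYX, ?_⟩
  exact hY.isPreconnected.subset_closure hYX fun x _ => hd x

theorem locallyConnectedSpace (hY : TruncSupClosed Y) (hd : Dense Y) (hYX : Y ⊆ X) :
    LocallyConnectedSpace X := by
  refine locallyConnectedSpace_iff_connected_subsets.2 fun x U hU => ?_
  obtain ⟨O, hO, hOU⟩ := (mem_nhds_subtype X x U).1 hU
  obtain ⟨O', hO'O, hO', hxO'⟩ := mem_nhds_iff.1 hO
  obtain ⟨t, J, hJ, hJO⟩ := isOpen_pi_iff.1 hO' x hxO'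
  let V : Set (ι → α) := (t : Set ι).pi fun i => ordConnectedComponent (J i) (x.1 i)
  have hV : IsOpen V :=
    isOpen_set_pi t.finite_toSet fun i hi => isOpen_ordConnectedComponent (hJ i hi).1 _
  have hxV : x.1 ∈ V := fun i hi => self_mem_ordConnectedComponent.2 (hJ i hi).2
  have hVO : V ⊆ O := fun y hy =>
    hO'O (hJO fun i hi => ordConnectedComponent_subset (hy i hi))
  have hYV : IsPreconnected (Y ∩ V) :=
    (hY.inter (pi fun _ _ => inferInstance)).isPreconnected
  refine ⟨Subtype.val ⁻¹' V, (hV.preimage continuous_subtype_val).mem_nhds hxV, ?_,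
    fun y hy => hOU (hVO hy)⟩
  rw [← IsInducing.subtypeVal.isPreconnected_image, Subtype.image_preimage_coe]
  exact isPreconnected_inter_of_dense hd hYX hV hYV

end TruncSupClosed

end Connectedness

section MeasurableFunctions

theorem mk_setOf_measurable_le (α : Type u) (β : Type v) [MeasurableSpace α] [MeasurableSpace β]
    [CountablySeparated β] :
    #{f : α → β | Measurable f} ≤ lift.{v} #{s : Set α | MeasurableSet s} ^ ℵ₀ := by
  obtain ⟨B, hB, hsep⟩ := exists_seq_separating β MeasurableSet.empty univ
  let φ : {f : α → β | Measurable f} → ℕ → {s : Set α | MeasurableSet s} :=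
    fun f n => ⟨f.1 ⁻¹' B n, f.2 (hB n)⟩
  have hφ : Injective φ := by
    refine fun f g hfg => Subtype.ext (funext fun a => hsep _ trivial _ trivial fun n => ?_)
    exact Set.ext_iff.1 (congrArg Subtype.val (congrFun hfg n)) a
  simpa using mk_le_of_injective (ULift.up_injective.comp hφ)

theorem meetsCountableFaces_setOf_measurable {α β : Type*} [MeasurableSpace α] [SeparatesPoints α]
    [MeasurableSpace β] [StandardBorelSpace β] [Nonempty β] :
    MeetsCountableFaces {f : α → β | Measurable f} := by
  intro A hA p
  have := hA.to_subtype
  have hp : Measurable (A.domRestrict p) := measurable_of_countable _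
  obtain ⟨f, hf, hpf⟩ := hp.exists_eq_measurable_comp
  exact ⟨f, hf, fun i hi => (congrFun hpf ⟨i, hi⟩).symm⟩

theorem exists_separatesPoints_mk_measurableSet_le {α : Type u} {κ : Cardinal.{u}}
    (h2 : 2 ≤ κ) (hκ : κ ^ ℵ₀ = κ) (hα : #α ≤ 2 ^ κ) :
    ∃ _ : MeasurableSpace α, SeparatesPoints α ∧ #{s : Set α | MeasurableSet s} ≤ κ := by
  obtain ⟨e⟩ : Nonempty (α ↪ Set κ.out) := by rwa [← Cardinal.le_def, mk_set, mk_out]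
  let B : Set (Set α) := range fun i => {x | i ∈ e x}
  let _ : MeasurableSpace α := generateFrom B
  refine ⟨_, ⟨fun x y hxy => e.injective (Set.ext fun i => ?_)⟩, ?_⟩
  · have hi : MeasurableSet {x | i ∈ e x} := measurableSet_generateFrom ⟨i, rfl⟩
    exact ⟨hxy _ hi, not_imp_not.1 (hxy _ hi.compl)⟩
  · have hB : #B ≤ κ := mk_range_le.trans_eq (mk_out κ)
    calc #{s : Set α | MeasurableSet s}
        ≤ max #B 2 ^ ℵ₀ := cardinal_measurableSet_le B
      _ ≤ κ ^ ℵ₀ := power_le_power_right (max_le hB h2)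
      _ = κ := hκ

theorem exists_mk_le_meetsCountableFaces_truncSupClosed {α : Type u} {κ : Cardinal.{u}}
    (h2 : 2 ≤ κ) (hκ : κ ^ ℵ₀ = κ) (hα : #α ≤ 2 ^ κ) :
    ∃ Y : Set (α → I), #Y ≤ κ ∧ MeetsCountableFaces Y ∧ TruncSupClosed Y := by
  obtain ⟨_, _, hm⟩ := exists_separatesPoints_mk_measurableSet_le h2 hκ hα
  refine ⟨{f | Measurable f}, ?_, meetsCountableFaces_setOf_measurable, .setOf_measurable⟩
  calc #{f : α → I | Measurable f}
      ≤ lift.{0} #{s : Set α | MeasurableSet s} ^ ℵ₀ := mk_setOf_measurable_le α I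
    _ ≤ κ ^ ℵ₀ := power_le_power_right (by rwa [lift_uzero])
    _ = κ := hκ

end MeasurableFunctions

section KDense

/-- A map `z : S → P` is `κ`-dense if every nonempty open subset of `P` contains `z s` for at least
`κ` many indices `s`. -/
def IsKDense {S : Type u} {P : Type*} [TopologicalSpace P] (κ : Cardinal.{u}) (z : S → P) : Prop :=
  ∀ ⦃U : Set P⦄, IsOpen U → U.Nonempty → κ ≤ #(z ⁻¹' U)

theorem mk_biUnion_finset_lt {ι : Type*} {α : Type u} {κ : Cardinal.{u}} (hκ : ℵ₀ ≤ κ)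
    {A : ι → Set α} (hA : ∀ i, #(A i) < κ) (t : Finset ι) : #(⋃ i ∈ t, A i : Set α) < κ := by
  classical
  induction t using Finset.induction_on with
  | empty => simpa using aleph0_pos.trans_le hκ
  | insert i t _ ih =>
    rw [Finset.set_biUnion_insert]
    exact (mk_union_le _ _).trans_lt (add_lt_of_lt hκ (hA i) ih)

theorem injective_of_denseRange {ι S K : Type*} [TopologicalSpace K] [T2Space K] [Nontrivial K]
    {f : ι → S → K} (hf : DenseRange fun s i => f i s) : Injective f := by
  classical
  intro i j hij
  have heval : (fun x : ι → K => x i) = fun x => x j :=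
    hf.equalizer (continuous_apply i) (continuous_apply j) hij
  obtain ⟨a, b, hab⟩ := exists_pair_ne K
  by_contra hne
  exact hab (by simpa [Ne.symm hne] using congrFun heval (update (const ι b) i a))

namespace IsKDense

variable {S : Type u} {P : Type*} [TopologicalSpace P] {κ : Cardinal.{u}} {z : S → P}

theorem denseRange (hz : IsKDense κ z) (hκ : 0 < κ) : DenseRange z := by
  refine dense_iff_inter_open.2 fun U hU hne => ?_
  obtain ⟨s, hs⟩ := mk_set_ne_zero_iff.1 (hκ.trans_le (hz hU hne)).ne'
  exact ⟨z s, hs, s, rfl⟩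

theorem comp {Q : Type*} [TopologicalSpace Q] {g : P → Q} (hz : IsKDense κ z)
    (hg : Continuous g) (hd : DenseRange g) : IsKDense κ (g ∘ z) :=
  fun _ hU hne => hz (hU.preimage hg) (hd.exists_mem_open hU hne)

theorem comp_equiv {T : Type u} (hz : IsKDense κ z) (e : T ≃ S) : IsKDense κ (z ∘ e) :=
  fun U hU hne => (hz hU hne).trans_eq
    (mk_congr (e.subtypeEquiv fun _ => Iff.rfl : (z ∘ e) ⁻¹' U ≃ z ⁻¹' U)).symm

theorem prodMk {ι K : Type*} [TopologicalSpace K] {E : ι → Set S} {q : ι → K} {g : S → K}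
    (hE : ∀ n, IsKDense κ ((E n).domRestrict z)) (hq : DenseRange q)
    (hg : ∀ n, ∀ s ∈ E n, g s = q n) : IsKDense κ fun s => (z s, g s) := by
  rintro U hU ⟨⟨x, c⟩, hxc⟩
  obtain ⟨V, W, hV, hW, hxV, hcW, hVW⟩ := isOpen_prod_iff.1 hU x c hxc
  obtain ⟨n, hn⟩ := hq.exists_mem_open hW ⟨c, hcW⟩
  have hsub : Subtype.val '' ((E n).domRestrict z ⁻¹' V) ⊆ (fun s => (z s, g s)) ⁻¹' U := by
    rintro _ ⟨⟨s, hs⟩, hsV, rfl⟩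
    exact hVW ⟨hsV, mem_of_eq_of_mem (hg n s hs) hn⟩
  calc κ ≤ #((E n).domRestrict z ⁻¹' V) := hE n hV ⟨x, hxV⟩
    _ = #(Subtype.val '' ((E n).domRestrict z ⁻¹' V)) := (mk_image_eq Subtype.val_injective).symm
    _ ≤ #((fun s => (z s, g s)) ⁻¹' U) := mk_le_mk_of_subset hsub

section Pi

variable {ι K : Type*} [TopologicalSpace K] {z w : S → ι → K}

theorem reindex [Nonempty K] (hz : IsKDense κ z) {ι' : Type*} {e : ι' → ι} (he : Injective e) :
    IsKDense κ fun s i => z s (e i) := by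
  have hcont : Continuous fun (x : ι → K) i => x (e i) := by fun_prop
  exact hz.comp hcont he.surjective_comp_right.denseRange

theorem of_finset (hz : ∀ t : Finset ι, IsKDense κ fun s (i : t) => z s i) : IsKDense κ z := by
  rintro U hU ⟨x, hx⟩
  obtain ⟨t, J, hJ, hJU⟩ := isOpen_pi_iff.1 hU x hx
  refine (hz t (isOpen_set_pi finite_univ fun i _ => (hJ i i.2).1)
    ⟨fun i => x i, fun i _ => (hJ i i.2).2⟩).trans (mk_le_mk_of_subset ?_)
  exact fun s hs => hJU fun i hi => hs ⟨i, hi⟩ trivial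

theorem congr_of_mk_lt (hz : IsKDense κ z) (hκ : ℵ₀ ≤ κ) (hzw : ∀ i, #{s | z s i ≠ w s i} < κ) :
    IsKDense κ w := by
  rintro U hU ⟨x, hx⟩
  obtain ⟨t, J, hJ, hJU⟩ := isOpen_pi_iff.1 hU x hx
  have hsub : z ⁻¹' (t : Set ι).pi J ⊆ w ⁻¹' U ∪ ⋃ i ∈ t, {s | z s i ≠ w s i} := by
    intro s hs
    by_cases h : ∀ i ∈ t, z s i = w s i
    · exact Or.inl (hJU fun i hi => h i hi ▸ hs i hi)
    · push Not at h
      exact Or.inr (by simpa using h)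
  have hle : κ ≤ #(w ⁻¹' U ∪ ⋃ i ∈ t, {s | z s i ≠ w s i} : Set S) :=
    (hz (isOpen_set_pi t.finite_toSet fun i hi => (hJ i hi).1)
      ⟨x, fun i hi => (hJ i hi).2⟩).trans (mk_le_mk_of_subset hsub)
  by_contra! hlt
  exact (add_lt_of_lt hκ hlt (mk_biUnion_finset_lt hκ hzw t)).not_ge (hle.trans (mk_union_le _ _))

/- Otherwise the small set of points of `E` in some open set is the zero set of a coordinate, and
the points of that open set with nonzero coordinate are missed by `E`. -/
theorem domRestrict_of_denseRange [T1Space K] {a : K} (hz : IsKDense #S z)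
    (hzero : ∀ A : Set S, #A < #S → ∃ i, ∀ s, z s i = a ↔ s ∈ A) {E : Set S}
    (hE : DenseRange (E.domRestrict z)) : IsKDense #S (E.domRestrict z) := by
  intro U hU hne
  by_contra! hlt
  obtain ⟨i, hi⟩ := hzero (Subtype.val '' (E.domRestrict z ⁻¹' U)) (mk_image_le.trans_lt hlt)
  have hV : IsOpen (U ∩ {x | x i ≠ a}) :=
    hU.inter (isOpen_ne.preimage (continuous_apply i))
  obtain ⟨s, hsU, hsE⟩ : (z ⁻¹' U \ Subtype.val '' (E.domRestrict z ⁻¹' U)).Nonempty :=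
    sdiff_nonempty_of_mk_lt_mk ((mk_image_le.trans_lt hlt).trans_le (hz hU hne))
  obtain ⟨e, heU, hea⟩ := hE.exists_mem_open hV ⟨z s, hsU, mt (hi s).1 hsE⟩
  exact hea ((hi e).2 ⟨e, heU, rfl⟩)

end Pi

end IsKDense

end KDense

section CountableCase

open scoped Classical in
theorem exists_finset_injOn_filter_mem_s6 {T : Type*} [Nonempty T] (t : Finset (Set T)) :
    ∃ F : Finset T, InjOn (fun P : Set T => {a ∈ F | a ∈ P}) (t : Set (Set T)) := by
  have hsep : ∀ P Q : Set T, P ≠ Q → ∃ a, ¬(a ∈ P ↔ a ∈ Q) := by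
    simp [Set.ext_iff]
  choose! d hd using hsep
  refine ⟨Finset.image₂ d t t, fun P hP Q hQ hPQ => ?_⟩
  by_contra hne
  have hmem : d P Q ∈ Finset.image₂ d t t := Finset.mem_image₂_of_mem hP hQ
  exact hd P Q hne (by simpa [hmem] using Finset.ext_iff.1 hPQ (d P Q))

/- The Engelking–Karłowicz construction: an index codes a finite set `F` and a finitely supported
function `φ`, and its coordinate at `P` is the value of `φ` at the trace of `P` on `F`. The
remaining component of the code only serves to repeat each point `#T` times. -/
theorem exists_isKDense_nat (T : Type u) [Infinite T] :
    ∃ z : T → Set T → ℕ, IsKDense #T z := by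
  classical
  let v : T × Finset T × (Finset T →₀ ℕ) → Set T → ℕ := fun c P => c.2.2 {a ∈ c.2.1 | a ∈ P}
  have hv : IsKDense #T v := by
    rintro U hU ⟨x, hx⟩
    obtain ⟨t, ht⟩ := exists_finset_forall_eq_imp_mem hU hx
    obtain ⟨F, hF⟩ := exists_finset_injOn_filter_mem_s6 t
    let φ : Finset T →₀ ℕ :=
      Finsupp.mapDomain (fun P => {a ∈ F | a ∈ P}) (Finsupp.indicator t fun P _ => x P)
    have hφ : ∀ P ∈ t, φ {a ∈ F | a ∈ P} = x P := fun P hP =>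
      (Finsupp.mapDomain_apply' _ _ (Finsupp.support_indicator_subset _ _) hF hP).trans
        (Finsupp.indicator_of_mem hP _)
    exact mk_le_of_injective (f := fun a => (⟨(a, F, φ), ht _ hφ⟩ : v ⁻¹' U))
      fun a b hab => congrArg (fun c => c.1.1) hab
  obtain ⟨e⟩ : Nonempty (T ≃ T × Finset T × (Finset T →₀ ℕ)) := Cardinal.eq.1 (by simp)
  exact ⟨v ∘ e, hv.comp_equiv e⟩

end CountableCase

section MaximalFamily

/-- The map `s ↦ (f s)_{f ∈ F}` into a power of `K` given by a family `F` of functions `S → K`; the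
family is called `κ`-independent if this map is `κ`-dense. -/
def familyEval {S K : Type*} (F : Set (S → K)) (s : S) (f : F) : K :=
  f.1 s

variable {S : Type u} {K : Type*} [TopologicalSpace K]

theorem isOfFiniteCharacter_setOf_isKDense_familyEval [Nonempty K] {κ : Cardinal.{u}} :
    Order.IsOfFiniteCharacter {F : Set (S → K) | IsKDense κ (familyEval F)} := by
  intro F
  refine ⟨fun hF G hGF _ => hF.reindex (inclusion_injective hGF),
    fun hF => .of_finset fun t => ?_⟩
  let G : Set (S → K) := Subtype.val '' (t : Set F)
  let e : t → G := fun i => ⟨i.1.1, mem_image_of_mem _ i.2⟩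
  have he : Injective e := fun i j hij =>
    Subtype.ext (Subtype.ext (congrArg (fun g : G => g.1) hij))
  have hG : IsKDense κ (familyEval G) :=
    hF G (Subtype.coe_image_subset _ _) (t.finite_toSet.image _)
  exact hG.reindex he

theorem isKDense_familyEval_insert {κ : Cardinal.{u}} {F : Set (S → K)} {g : S → K}
    (h : IsKDense κ fun s => (familyEval F s, g s)) : IsKDense κ (familyEval (insert g F)) := by
  classical
  let φ : (F → K) × K → ↥(insert g F) → K :=
    fun x f => if hf : f.1 ∈ F then x.1 ⟨f, hf⟩ else x.2
  have hφ : Continuous φ := continuous_pi fun f => by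
    by_cases hf : f.1 ∈ F <;> simp only [φ, hf, dite_true, dite_false] <;> fun_prop
  have hφ_surj : Surjective φ := by
    intro y
    refine ⟨(fun f => y ⟨f, mem_insert_of_mem g f.2⟩, y ⟨g, mem_insert g F⟩), ?_⟩
    ext ⟨f, rfl | hf⟩ <;> simp [φ, *]
  have heval : φ ∘ (fun s => (familyEval F s, g s)) = familyEval (insert g F) := by
    ext s ⟨f, rfl | hf⟩ <;> simp [φ, familyEval, *]
  exact heval ▸ h.comp hφ hφ_surj.denseRange

theorem exists_forall_eq_of_pairwise_disjoint {S K ι : Type*} [Nonempty K] {E : ι → Set S}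
    (hE : Pairwise (Disjoint on E)) (q : ι → K) : ∃ g : S → K, ∀ n, ∀ s ∈ E n, g s = q n := by
  classical
  refine ⟨fun s => if h : ∃ n, s ∈ E n then q h.choose else Classical.arbitrary K, ?_⟩
  intro n s hs
  have h : ∃ n, s ∈ E n := ⟨n, hs⟩
  have hn : h.choose = n := hE.eq (not_disjoint_iff.2 ⟨s, h.choose_spec, hs⟩)
  simp only [h, dite_true, hn]

theorem exists_denseRange_nat_ne [SecondCountableTopology K] [PerfectSpace K] [Nontrivial K]
    (a : K) : ∃ u : ℕ → K, DenseRange u ∧ ∀ n, u n ≠ a := by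
  obtain ⟨t, hta, htc, htd⟩ := (dense_compl_singleton a).exists_countable_dense_subset
  obtain ⟨u, rfl⟩ := htc.exists_eq_range htd.nonempty
  exact ⟨u, htd, fun n => hta ⟨n, rfl⟩⟩

theorem exists_isKDense_pi (S : Type u) [Infinite S] [SecondCountableTopology K] [PerfectSpace K]
    [Nontrivial K] (a : K) :
    ∃ z : S → Set S → K, IsKDense #S z ∧
      ∀ A : Set S, #A < #S → ∀ s, z s A = a ↔ s ∈ A := by
  classical
  obtain ⟨u, hu, hua⟩ := exists_denseRange_nat_ne a
  obtain ⟨v, hv⟩ := exists_isKDense_nat S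
  have huv : IsKDense #S fun s P => u (v s P) :=
    hv.comp (g := fun x P => u (x P)) (by fun_prop) (DenseRange.piMap fun _ => hu)
  refine ⟨fun s A => if s ∈ A ∧ #A < #S then a else u (v s A),
    huv.congr_of_mk_lt (aleph0_le_mk S) fun A => ?_, fun A hA s => ?_⟩
  · by_cases hA : #A < #S
    · refine (mk_le_mk_of_subset fun s hs => ?_).trans_lt hA
      by_contra hsA
      exact hs (by simp [hsA])
    · simpa [hA] using pos_of_ne_zero (mk_ne_zero S)
  · by_cases hs : s ∈ A <;> simp [hs, hA, hua]

theorem exists_maximal_isKDense_familyEval (S : Type u) [Infinite S] [T2Space K]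
    [SecondCountableTopology K] [PerfectSpace K] [Nontrivial K] (a : K) :
    ∃ F : Set (S → K), Maximal (fun F => IsKDense #S (familyEval F)) F ∧
      (∀ A : Set S, #A < #S → ∃ f ∈ F, ∀ s, f s = a ↔ s ∈ A) ∧ Nonempty (Set S ↪ F) := by
  obtain ⟨z, hz, hza⟩ := exists_isKDense_pi S a
  let f : Set S → S → K := fun A s => z s A
  have hf : Injective f := injective_of_denseRange (hz.denseRange (pos_of_ne_zero (mk_ne_zero S)))
  have hrange : familyEval (range f) = fun s i => z s (rangeSplitting f i) :=
    funext₂ fun s i => (congrFun (apply_rangeSplitting f i) s).symm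
  have hF₀ : IsKDense #S (familyEval (range f)) := hrange ▸ hz.reindex (rangeSplitting_injective f)
  obtain ⟨F, hfF, hF⟩ := isOfFiniteCharacter_setOf_isKDense_familyEval.exists_maximal hF₀
  exact ⟨F, hF, fun A hA => ⟨f A, hfF ⟨A, rfl⟩, hza A hA⟩,
    ⟨⟨fun A => ⟨f A, hfF ⟨A, rfl⟩⟩, fun A B hAB => hf (congrArg Subtype.val hAB)⟩⟩⟩

/- Otherwise glue the `E n` along a dense sequence `q` of `K` to a new member `g` of the family.
Having the constant value `q 0` on `E 0`, it keeps the image of `E 0` from being dense. -/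
theorem not_forall_denseRange_of_maximal_isKDense [SecondCountableTopology K] [T1Space K]
    [Nontrivial K] {F : Set (S → K)} {a : K} (hF : Maximal (fun F => IsKDense #S (familyEval F)) F)
    (hzero : ∀ A : Set S, #A < #S → ∃ f ∈ F, ∀ s, f s = a ↔ s ∈ A) {E : ℕ → Set S}
    (hE : Pairwise (Disjoint on E)) : ¬ ∀ n, DenseRange ((E n).domRestrict (familyEval F)) := by
  intro hdense
  let q : ℕ → K := TopologicalSpace.denseSeq K
  obtain ⟨g, hg⟩ := exists_forall_eq_of_pairwise_disjoint hE q
  have hEdense : ∀ n, IsKDense #S ((E n).domRestrict (familyEval F)) := fun n =>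
    hF.prop.domRestrict_of_denseRange (a := a)
      (fun A hA => let ⟨f, hf, hfA⟩ := hzero A hA; ⟨⟨f, hf⟩, hfA⟩) (hdense n)
  have hgF : g ∈ F := hF.mem_of_prop_insert <|
    isKDense_familyEval_insert (.prodMk hEdense (TopologicalSpace.denseRange_denseSeq K) hg)
  obtain ⟨c, hc⟩ := exists_ne (q 0)
  obtain ⟨s, hs⟩ := (hdense 0).exists_mem_open
    (isOpen_ne.preimage (continuous_apply (⟨g, hgF⟩ : F)) :
      IsOpen {x : F → K | x ⟨g, hgF⟩ ≠ q 0})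
    ⟨fun _ => c, hc⟩
  exact hs (hg 0 s s.2)

end MaximalFamily

section Power

theorem exists_injective_isKDense_not_forall_denseRange (S : Type u) [Infinite S] {M : Type u}
    (hM : #M = 2 ^ #S) :
    ∃ z : S → M → I, Injective z ∧ IsKDense #S z ∧ ∀ E : ℕ → Set S, Pairwise (Disjoint on E) →
      ¬ ∀ n, DenseRange ((E n).domRestrict z) := by
  obtain ⟨F, hF, hzero, ⟨e⟩⟩ := exists_maximal_isKDense_familyEval S (0 : I)
  have hFM : #F = #M := by
    rw [hM]
    refine le_antisymm ?_ (by simpa using mk_le_of_injective e.injective)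
    calc #F ≤ #(S → I) := mk_set_le F
      _ = 2 ^ #S := by
        simp [mk_Icc_real, ← two_power_aleph0, ← power_mul, aleph0_mul_eq (aleph0_le_mk S)]
  obtain ⟨φ⟩ := Cardinal.eq.1 hFM
  refine ⟨fun s m => familyEval F s (φ.symm m), fun s t hst => ?_,
    hF.prop.reindex φ.symm.injective, fun E hE hdense => ?_⟩
  · obtain ⟨f, hf, hfs⟩ := hzero {s} (by simpa using one_lt_aleph0.trans_le (aleph0_le_mk S))
    have hfst : f s = f t := by simpa [familyEval] using congrFun hst (φ ⟨f, hf⟩)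
    exact ((hfs t).1 (hfst ▸ (hfs s).2 rfl)).symm
  · refine not_forall_denseRange_of_maximal_isKDense hF hzero hE fun n => ?_
    have hφ : Continuous fun (x : M → I) f => x (φ f) := by fun_prop
    have hcomp : (fun x f => x (φ f)) ∘ (E n).domRestrict (fun s m => familyEval F s (φ.symm m)) =
        (E n).domRestrict (familyEval F) := by
      ext s f; simp
    exact hcomp ▸ φ.injective.surjective_comp_right.denseRange.comp (hdense n) hφ

end Power

section Resolvability

theorem dispersion_eq_mk_of_isKDense {S P : Type u} [TopologicalSpace P] {X : Set P} {z : S → P}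
    (hX : X.Nonempty) (hz : IsKDense #X z) (hz_inj : Injective z) (hzX : range z ⊆ X) :
    dispersion X = #X := by
  have := hX.to_subtype
  refine le_antisymm (csInf_le' ⟨univ, isOpen_univ, univ_nonempty, mk_univ⟩)
    (le_csInf ⟨_, univ, isOpen_univ, univ_nonempty, rfl⟩ ?_)
  rintro _ ⟨V, hV, ⟨x, hx⟩, rfl⟩
  obtain ⟨U, hU, rfl⟩ := isOpen_induced_iff.1 hV
  let f : z ⁻¹' U → (Subtype.val ⁻¹' U : Set X) := fun s => ⟨⟨z s, hzX ⟨s, rfl⟩⟩, s.2⟩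
  have hf : Injective f := fun s t hst =>
    Subtype.ext (hz_inj (congrArg (fun y => (y.1 : P)) hst))
  exact (hz hU ⟨x, hx⟩).trans (mk_le_of_injective hf)

theorem exists_nat_embedding_forall_disjoint {ι α : Type u} [Infinite ι] {Y : Set α}
    (hY : #Y < #ι) {D : ι → Set α} (hD : Pairwise (Disjoint on D)) :
    ∃ n : ℕ ↪ ι, ∀ k, Disjoint (D (n k)) Y := by
  let B : Set ι := {i | ¬Disjoint (D i) Y}
  choose y hyD hyY using fun i : B => not_disjoint_iff.1 i.2
  have hy : Injective fun i : B => (⟨y i, hyY i⟩ : Y) := fun i j hij =>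
    Subtype.ext <| hD.eq <| not_disjoint_iff.2
      ⟨y i, hyD i, mem_of_eq_of_mem (congrArg Subtype.val hij) (hyD j)⟩
  have hB : #(Bᶜ : Set ι) = #ι := mk_compl_of_infinite B ((mk_le_of_injective hy).trans_lt hY)
  have : Infinite (Bᶜ : Set ι) := infinite_iff.2 (hB ▸ aleph0_le_mk ι)
  let e : ℕ ↪ (Bᶜ : Set ι) := Infinite.natEmbedding _
  exact ⟨e.trans (.subtype _), fun k => not_not.1 (e k).2⟩

theorem not_isKResolvable_succ {P S : Type u} [TopologicalSpace P] {κ : Cardinal.{u}}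
    {X Y : Set P} {z : S → P} (hκ : ℵ₀ ≤ κ) (hX : Dense X) (hXY : X ⊆ Y ∪ range z) (hY : #Y ≤ κ)
    (hz : ∀ E : ℕ → Set S, Pairwise (Disjoint on E) →
      ¬ ∀ n, DenseRange ((E n).domRestrict z)) :
    ¬ IsKResolvable X (Order.succ κ) := by
  rintro ⟨D, hD, hdisj⟩
  have hlt : κ < #(Order.succ κ).out := (Order.lt_succ κ).trans_eq (mk_out _).symm
  have : Infinite (Order.succ κ).out := infinite_iff.2 (hκ.trans hlt.le)
  let D' : (Order.succ κ).out → Set P := fun i => Subtype.val '' D i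
  have hD' : Pairwise (Disjoint on D') := fun i j hij =>
    (disjoint_image_iff Subtype.val_injective).2 (hdisj hij)
  obtain ⟨n, hn⟩ := exists_nat_embedding_forall_disjoint (hY.trans_lt hlt) hD'
  refine hz (fun k => z ⁻¹' D' (n k)) (fun i j hij => ?_) fun k => ?_
  · exact (hD' (n.injective.ne hij)).preimage z
  · have hsub : D' (n k) ⊆ range z := fun x hx =>
      (hXY (Subtype.coe_image_subset _ _ hx)).resolve_left ((hn k).notMem_of_mem_left hx)
    have hrange : range ((z ⁻¹' D' (n k)).domRestrict z) = D' (n k) := by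
      rw [range_domRestrict, image_preimage_eq_of_subset hsub]
    rw [DenseRange, hrange]
    exact hX.denseRange_val.dense_image continuous_subtype_val (hD (n k))

end Resolvability

/-- if `𝔠 ≤ κ = κ^ω < λ` and `2^κ = 2^λ = μ`, then the Tychonoff
cube `[0,1]^μ` has a dense subspace `X` with `|X| = Δ(X) = λ` which is
pseudocompact, connected, locally connected and not `κ⁺`-resolvable. -/
theorem stmt6 (κ lam : Cardinal.{u}) (h1 : Cardinal.continuum ≤ κ)
    (h2 : κ ^ (ℵ₀ : Cardinal.{u}) = κ) (h3 : κ < lam)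
    (h4 : (2 : Cardinal.{u}) ^ κ = 2 ^ lam) :
    ∃ X : Set (((2 : Cardinal.{u}) ^ κ).out → I),
      Dense X ∧ #X = lam ∧ dispersion X = lam ∧
      IsPseudocompact X ∧ ConnectedSpace X ∧ LocallyConnectedSpace X ∧
      ¬ IsKResolvable X (Order.succ κ) := by
  induction lam using Cardinal.inductionOn with | _ S
  have hκ : ℵ₀ ≤ κ := aleph0_le_continuum.trans h1
  have hS : ℵ₀ ≤ #S := hκ.trans h3.le
  have : Infinite S := infinite_iff.2 hS
  obtain ⟨Y, hYκ, hY, hYsup⟩ := exists_mk_le_meetsCountableFaces_truncSupClosed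
    (ofNat_le_aleph0.trans hκ) h2 (mk_out (2 ^ κ)).le
  obtain ⟨z, hz_inj, hz, hz_irres⟩ :=
    exists_injective_isKDense_not_forall_denseRange S ((mk_out (2 ^ κ)).trans h4)
  have hYX : Y ⊆ Y ∪ range z := subset_union_left
  have hzX : range z ⊆ Y ∪ range z := subset_union_right
  have hX : Dense (Y ∪ range z) := hY.dense.mono hYX
  have hcard : #(Y ∪ range z : Set _) = #S :=
    le_antisymm ((mk_union_le _ _).trans (add_le_of_le hS (hYκ.trans h3.le) mk_range_le))
      ((mk_range_eq z hz_inj).ge.trans (mk_le_mk_of_subset hzX))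
  have hdisp : dispersion (Y ∪ range z : Set _) = #(Y ∪ range z : Set _) :=
    dispersion_eq_mk_of_isKDense hX.nonempty (by rwa [hcard]) hz_inj hzX
  exact ⟨Y ∪ range z, hX, hcard, hdisp.trans hcard, (hY.mono hYX).isPseudocompact,
    hYsup.connectedSpace hY.dense hYX, hYsup.locallyConnectedSpace hY.dense hYX,
    not_isKResolvable_succ hκ hX subset_rfl hYκ hz_irres⟩
end
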